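/- There is a constant C ≥ 1 depending only on C_d and C_P such that for every u ∈ BV(X) and all Lebesgue points y, z of u with y ≠ z: |u(y) − u(z)| ≤ C·d(y,z)·( M_{2d(y,z)} V(u,·)(y) + M_{2d(y,z)} V(u,·)(z) ), where M_R V(u,·)(w) := sup_{0<ρ≤R} V(u,B(w,ρ))/μ(B(w,ρ)). -/

import Mathlib

open MeasureTheory Metric Filter Set Topology
open scoped NNReal ENNReal

noncomputable section

universe u

/-- The measure `μ` is doubling with constant `Cd`:
`0 < μ(B(x,2r)) ≤ Cd·μ(B(x,r)) < ∞` for every `x` and every `r > 0`. -/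
def IsDoublingWith {X : Type u} [PseudoMetricSpace X] [MeasurableSpace X]
    (μ : Measure X) (Cd : ℝ≥0) : Prop :=
  ∀ (x : X) (r : ℝ), 0 < r →
    0 < μ (ball x (2 * r)) ∧
      μ (ball x (2 * r)) ≤ (Cd : ℝ≥0∞) * μ (ball x r) ∧
      (Cd : ℝ≥0∞) * μ (ball x r) < ⊤

/-- `X` is a geodesic space: any two points are joined by a unit-speed geodesic. -/
def IsGeodesic (X : Type u) [PseudoMetricSpace X] : Prop :=
  ∀ x y : X, ∃ γ : ℝ → X,
    LipschitzOnWith 1 γ (Icc 0 (dist x y)) ∧ γ 0 = x ∧ γ (dist x y) = y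

/-- `g` is an upper gradient of `u`: for every `L ≥ 0` and every `1`-Lipschitz curve
`γ : [0,L] → X`, `|u(γ 0) − u(γ L)| ≤ ∫₀^L g(γ t) dt`. -/
def IsUpperGradientOf {X : Type u} [PseudoMetricSpace X] (g u : X → ℝ) : Prop :=
  ∀ L : ℝ, 0 ≤ L → ∀ γ : ℝ → X, LipschitzOnWith 1 γ (Icc 0 L) →
    |u (γ 0) - u (γ L)| ≤ ∫ t in (0:ℝ)..L, g (γ t)

/-- The lower pointwise Lipschitz constant
`lip u (x) = liminf_{r→0} r⁻¹ sup_{y ∈ B(x,r)} |u y − u x|`. -/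
def lipConst {X : Type u} [PseudoMetricSpace X] (u : X → ℝ) (x : X) : ℝ≥0∞ :=
  Filter.liminf
    (fun r : ℝ => ⨆ y ∈ ball x r, ENNReal.ofReal (|u y - u x| / r)) (𝓝[>] (0:ℝ))

/-- `u` is locally Lipschitz on `W`: Lipschitz on every closed bounded subset of `W`. -/
def LocallyLipschitzOnSet {X : Type u} [PseudoMetricSpace X] (u : X → ℝ) (W : Set X) : Prop :=
  ∀ K : Set X, IsClosed K → Bornology.IsBounded K → K ⊆ W →
    ∃ L : ℝ≥0, LipschitzOnWith L u K

/-- `u i → f` in `L¹_loc(W)`. -/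
def TendstoL1loc {X : Type u} [PseudoMetricSpace X] [MeasurableSpace X]
    (μ : Measure X) (u : ℕ → X → ℝ) (f : X → ℝ) (W : Set X) : Prop :=
  ∀ K : Set X, IsClosed K → Bornology.IsBounded K → K ⊆ W →
    Tendsto (fun i => ∫⁻ x in K, ENNReal.ofReal |u i x - f x| ∂μ) atTop (𝓝 0)

/-- Total variation `V(f,W)` of `f` on an open set `W`:
the infimum over sequences of locally Lipschitz functions converging to `f` in `L¹_loc(W)`
of the liminf of `∫_W lip u_i dμ`. -/
def totVarOn {X : Type u} [PseudoMetricSpace X] [MeasurableSpace X]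
    (μ : Measure X) (f : X → ℝ) (W : Set X) : ℝ≥0∞ :=
  ⨅ (us : ℕ → X → ℝ) (_ : ∀ i, LocallyLipschitzOnSet (us i) W)
    (_ : TendstoL1loc μ us f W),
    Filter.liminf (fun i => ∫⁻ x in W, lipConst (us i) x ∂μ) atTop

/-- Total variation `V(f,A)` of `f` on an arbitrary set `A`:
infimum of `V(f,W)` over open `W ⊇ A`. -/
def totVarSet {X : Type u} [PseudoMetricSpace X] [MeasurableSpace X]
    (μ : Measure X) (f : X → ℝ) (A : Set X) : ℝ≥0∞ :=
  ⨅ (W : Set X) (_ : IsOpen W) (_ : A ⊆ W), totVarOn μ f W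

/-- `f` is of bounded variation: locally integrable and `V(f,X) < ∞`. -/
def IsBV {X : Type u} [MetricSpace X] [MeasurableSpace X]
    (μ : Measure X) (f : X → ℝ) : Prop :=
  LocallyIntegrable f μ ∧ totVarOn μ f Set.univ < ⊤

/-- `(X,d,μ)` supports a `1`-Poincaré inequality with constant `CP`. -/
def SupportsPoincare {X : Type u} [MetricSpace X] [MeasurableSpace X]
    (μ : Measure X) (CP : ℝ) : Prop :=
  ∀ u : X → ℝ, LocallyLipschitzOnSet u Set.univ →
    ∀ g : X → ℝ, (∀ x, 0 ≤ g x) → Measurable g → IsUpperGradientOf g u →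
      ∀ (x : X) (r : ℝ), 0 < r →
        (⨍ y in ball x r, |u y - (⨍ z in ball x r, u z ∂μ)| ∂μ) ≤
          CP * r * (⨍ y in ball x r, g y ∂μ)

/-- Standing assumptions: a complete geodesic metric measure space with at least two
points, whose measure is doubling and supports a 1-Poincaré inequality. -/
def GoodSpace (X : Type u) [MetricSpace X] [MeasurableSpace X]
    (μ : Measure X) (Cd : ℝ≥0) (CP : ℝ) : Prop :=
  Nontrivial X ∧ CompleteSpace X ∧ IsGeodesic X ∧
    IsDoublingWith μ Cd ∧ SupportsPoincare μ CP

/-- The codimension-1 Hausdorff measure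
`𝓗(A) = sup_{δ>0} inf { Σ μ(B_i)/r_i : 0 < r_i ≤ δ, A ⊆ ⋃ B_i }`,
the infimum over countable coverings of `A` by balls (balls of nonpositive radius
are empty and contribute `0`). -/
def codimOneH {X : Type u} [PseudoMetricSpace X] [MeasurableSpace X]
    (μ : Measure X) (A : Set X) : ℝ≥0∞ :=
  ⨆ (δ : ℝ) (_ : 0 < δ),
    ⨅ (c : ℕ → X) (r : ℕ → ℝ) (_ : ∀ i, r i ≤ δ)
      (_ : A ⊆ ⋃ i, ball (c i) (r i)),
      ∑' i, if 0 < r i then μ (ball (c i) (r i)) / ENNReal.ofReal (r i) else 0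

/-- The measure theoretic boundary `∂*E`. -/
def measBdry {X : Type u} [PseudoMetricSpace X] [MeasurableSpace X]
    (μ : Measure X) (E : Set X) : Set X :=
  {x : X |
    0 < Filter.limsup (fun r : ℝ => μ (E ∩ ball x r) / μ (ball x r)) (𝓝[>] (0:ℝ)) ∧
    0 < Filter.limsup (fun r : ℝ => μ (Eᶜ ∩ ball x r) / μ (ball x r)) (𝓝[>] (0:ℝ))}

/-- `A` has density `0` at `x`. -/
def DensityZeroAt {X : Type u} [PseudoMetricSpace X] [MeasurableSpace X]
    (μ : Measure X) (A : Set X) (x : X) : Prop :=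
  Tendsto (fun r : ℝ => μ (A ∩ ball x r) / μ (ball x r)) (𝓝[>] (0:ℝ)) (𝓝 0)

/-- `A` has density `1` at `x`. -/
def DensityOneAt {X : Type u} [PseudoMetricSpace X] [MeasurableSpace X]
    (μ : Measure X) (A : Set X) (x : X) : Prop :=
  Tendsto (fun r : ℝ => μ (A ∩ ball x r) / μ (ball x r)) (𝓝[>] (0:ℝ)) (𝓝 1)

/-- `x` is a Lebesgue point of `u`. -/
def LebesguePointOf {X : Type u} [MetricSpace X] [MeasurableSpace X]
    (μ : Measure X) (u : X → ℝ) (x : X) : Prop :=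
  Tendsto (fun r : ℝ => ⨍ y in ball x r, |u y - u x| ∂μ) (𝓝[>] (0:ℝ)) (𝓝 0)

/-- `u` is a Borel representative whose value at each Lebesgue point equals the limit
of its ball averages. -/
def PreciseRep {X : Type u} [MetricSpace X] [MeasurableSpace X]
    (μ : Measure X) (u : X → ℝ) : Prop :=
  Measurable u ∧ ∀ (x : X) (c : ℝ),
    Tendsto (fun r : ℝ => ⨍ y in ball x r, u y ∂μ) (𝓝[>] (0:ℝ)) (𝓝 c) → u x = c

/-- The restricted maximal function `M_R ν (x) = sup_{0<r≤R} ν(B(x,r))/μ(B(x,r))`. -/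
def restrMaximal {X : Type u} [PseudoMetricSpace X] [MeasurableSpace X]
    (μ ν : Measure X) (R : ℝ) (x : X) : ℝ≥0∞ :=
  ⨆ (r : ℝ) (_ : 0 < r) (_ : r ≤ R), ν (ball x r) / μ (ball x r)

/-- `F_g(x,y)`: the infimum of `∫_γ g ds` over 1-Lipschitz curves `γ : [0,L] → Z`
joining `x` to `y` (the infimum over the empty set is `∞`). -/
def curveInf {Z : Type u} [PseudoMetricSpace Z] (g : Z → ℝ) (x y : Z) : ℝ≥0∞ :=
  ⨅ (L : ℝ) (_ : 0 ≤ L) (γ : ℝ → Z) (_ : LipschitzOnWith 1 γ (Icc 0 L))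
    (_ : γ 0 = x) (_ : γ L = y),
    ∫⁻ t in Icc (0:ℝ) L, ENNReal.ofReal (g (γ t))

/-- Weak-star convergence of measures: test against continuous, compactly
supported functions. -/
def WeakStar {Z : Type u} [MetricSpace Z] [MeasurableSpace Z]
    (ν : ℕ → Measure Z) (m : Measure Z) : Prop :=
  ∀ φ : Z → ℝ, Continuous φ → HasCompactSupport φ →
    Tendsto (fun n => ∫ x, φ x ∂(ν n)) atTop (𝓝 (∫ x, φ x ∂m))

/-- `φ ∈ BV_c(U)`: a BV function whose support is compact and contained in `U`. -/
def MemBVc {X : Type u} [MetricSpace X] [MeasurableSpace X]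
    (μ : Measure X) (φ : X → ℝ) (U : Set X) : Prop :=
  IsBV μ φ ∧ IsCompact (tsupport φ) ∧ tsupport φ ⊆ U


/-- A metric space carrying a measure for which all balls have positive finite measure is
second countable. -/
theorem secondCountableTopology_of_measure_ball {X : Type*} [PseudoMetricSpace X]
    [MeasurableSpace X] [BorelSpace X] (μ : Measure X)
    (hpos : ∀ (x : X) (r : ℝ), 0 < r → 0 < μ (ball x r))
    (hfin : ∀ (x : X) (r : ℝ), μ (ball x r) < ⊤) : SecondCountableTopology X := by
  rcases isEmpty_or_nonempty X with hX | ⟨⟨x₀⟩⟩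
  · infer_instance
  have : SigmaFinite μ := ⟨⟨{
    set := fun n => ball x₀ n
    set_mem := fun _ => trivial
    finite := fun n => hfin x₀ n
    spanning := iUnion_ball_nat x₀ }⟩⟩
  refine Metric.secondCountable_of_almost_dense_set fun ε hε => ?_
  obtain ⟨s, hs⟩ := zorn_subset {s : Set X | s.Pairwise fun a b => ε ≤ dist a b} (by
    intro c hc hchain
    refine ⟨⋃₀ c, ?_, fun t ht => subset_sUnion_of_mem ht⟩
    exact (pairwise_sUnion hchain.directedOn).2 fun t ht => hc ht)
  refine ⟨s, ?_, fun x => ?_⟩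
  · have h := Measure.countable_meas_pos_of_disjoint_iUnion (μ := μ)
      (As := fun a : s => ball (a : X) (ε / 2)) (fun _ => measurableSet_ball) (by
        intro a b hab
        have := hs.prop a.2 b.2 (fun h => hab (Subtype.ext h))
        exact ball_disjoint_ball (by linarith))
    have huniv : {a : s | 0 < μ (ball (a : X) (ε / 2))} = univ :=
      eq_univ_of_forall fun a => hpos a _ (half_pos hε)
    rw [huniv] at h
    exact countable_coe_iff.1 (countable_univ_iff.1 h)
  · by_contra! hx
    have hmem : x ∈ s := by
      refine hs.le_of_ge (y := insert x s) ?_ (subset_insert x s) (mem_insert x s)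
      refine hs.prop.insert fun b hb _ => ⟨(hx b hb).le, ?_⟩
      rw [dist_comm]
      exact (hx b hb).le
    have := hx x hmem
    rw [dist_self] at this
    linarith

/-- A variant of the lower pointwise Lipschitz constant, computed along dyadic radii. -/
def dyadicLip {X : Type*} [PseudoMetricSpace X] (v : X → ℝ) (x : X) : ℝ≥0∞ :=
  liminf (fun n : ℕ => ⨆ y ∈ ball x ((1 / 2) ^ n),
    ENNReal.ofReal (|v y - v x| / (1 / 2) ^ (n + 1))) atTop

theorem measurable_dyadicLip {X : Type*} [PseudoMetricSpace X] [MeasurableSpace X] [BorelSpace X]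
    {v : X → ℝ} (hv : Continuous v) : Measurable (dyadicLip v) := by
  refine Measurable.liminf fun n => measurable_of_Ioi fun a => IsOpen.measurableSet ?_
  have : (fun x => ⨆ y ∈ ball x ((1 / 2) ^ n),
      ENNReal.ofReal (|v y - v x| / (1 / 2) ^ (n + 1))) ⁻¹' Ioi a =
      ⋃ y, {x | dist y x < (1 / 2) ^ n} ∩
        {x | a < ENNReal.ofReal (|v y - v x| / (1 / 2) ^ (n + 1))} := by
    ext x
    simp [lt_iSup_iff]
  rw [this]
  refine isOpen_iUnion fun y => IsOpen.inter ?_ ?_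
  · exact isOpen_lt (by fun_prop) continuous_const
  · exact isOpen_lt continuous_const (ENNReal.continuous_ofReal.comp (by fun_prop))

theorem dyadicLip_le {X : Type*} [PseudoMetricSpace X] {v : X → ℝ} {K : ℝ≥0}
    (hv : LipschitzWith K v) (x : X) : dyadicLip v x ≤ ENNReal.ofReal (2 * K) := by
  refine (liminf_le_liminf (Eventually.of_forall fun n => iSup₂_le fun y hy => ?_)).trans
    (liminf_const _).le
  refine ENNReal.ofReal_le_ofReal ?_
  rw [div_le_iff₀ (by positivity)]
  have h1 := hv.dist_le_mul y x
  rw [Real.dist_eq] at h1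
  have h2 : (K : ℝ) * dist y x ≤ K * (1 / 2) ^ n :=
    mul_le_mul_of_nonneg_left (mem_ball.1 hy).le K.2
  calc _ ≤ (K : ℝ) * (1 / 2) ^ n := h1.trans h2
    _ = _ := by ring

theorem dyadicLip_le_lipConst {X : Type*} [PseudoMetricSpace X] {v w : X → ℝ} {x : X}
    (h : v =ᶠ[𝓝 x] w) : dyadicLip v x ≤ 4 * lipConst w x := by
  refine le_of_forall_lt_imp_le_of_dense fun a ha => ?_
  rw [mul_comm, ← ENNReal.div_le_iff (by norm_num) (by norm_num)]
  obtain ⟨N, hN⟩ := eventually_atTop.1 (eventually_lt_of_lt_liminf ha)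
  obtain ⟨δ, hδ, hball⟩ := Metric.eventually_nhds_iff_ball.1 h
  refine le_liminf_of_le (by isBoundedDefault) ?_
  have hsmall : 0 < min δ (min ((1 / 2 : ℝ) ^ N) 1) := by positivity
  filter_upwards [Ioo_mem_nhdsGT hsmall] with r hr
  obtain ⟨hr0, hr1⟩ := hr
  rw [lt_min_iff, lt_min_iff] at hr1
  obtain ⟨n, hn1, hn2⟩ := exists_nat_pow_near_of_lt_one hr0 hr1.2.2.le
    (by norm_num : (0 : ℝ) < 1 / 2) (by norm_num)
  have hNn : N ≤ n + 1 :=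
    ((pow_lt_pow_iff_right_of_lt_one₀ (by norm_num : (0 : ℝ) < 1 / 2) (by norm_num)).1
      (hn1.trans hr1.2.1)).le
  rw [ENNReal.div_le_iff (by norm_num) (by norm_num), mul_comm, ENNReal.mul_iSup]
  refine (hN (n + 1) hNn).le.trans (iSup_le fun y => iSup_le fun hy => ?_)
  have hyr : y ∈ ball x r := ball_subset_ball hn1.le hy
  refine le_trans ?_ (le_iSup _ y)
  rw [ENNReal.mul_iSup]
  refine le_trans ?_ (le_iSup _ hyr)
  rw [hball y (ball_subset_ball hr1.1.le hyr), hball x (mem_ball_self hδ),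
    show (4 : ℝ≥0∞) = ENNReal.ofReal 4 by norm_num, ← ENNReal.ofReal_mul (by norm_num)]
  refine ENNReal.ofReal_le_ofReal ?_
  rw [mul_div_assoc', div_le_div_iff₀ (by positivity) hr0]
  have h1 : r ≤ 4 * (1 / 2) ^ (n + 1 + 1) := by
    rw [pow_succ, pow_succ]
    linarith
  calc |w y - w x| * r ≤ |w y - w x| * (4 * (1 / 2) ^ (n + 1 + 1)) := by gcongr
    _ = _ := by ring

theorem ofReal_abs_deriv_le_dyadicLip {X : Type*} [PseudoMetricSpace X] {v : X → ℝ}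
    {L t : ℝ} {γ : ℝ → X} (hγ : LipschitzOnWith 1 γ (Icc 0 L)) (ht : t ∈ Ioo 0 L)
    (hd : DifferentiableAt ℝ (fun s => v (γ s)) t) :
    ENNReal.ofReal |deriv (fun s => v (γ s)) t| ≤ dyadicLip v (γ t) := by
  have hlim : Tendsto (fun n : ℕ => ((1 / 2 : ℝ) ^ (n + 1))) atTop (𝓝 0) :=
    (tendsto_pow_atTop_nhds_zero_of_lt_one (by norm_num) (by norm_num)).comp
      (tendsto_add_atTop_nat 1)
  have hlim' : Tendsto (fun n : ℕ => ((1 / 2 : ℝ) ^ (n + 1))) atTop (𝓝[≠] 0) :=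
    tendsto_nhdsWithin_iff.2 ⟨hlim, Eventually.of_forall fun n => by simp⟩
  have hs := (ENNReal.continuous_ofReal.tendsto _).comp
    ((hasDerivAt_iff_tendsto_slope_zero.1 hd.hasDerivAt).comp hlim').abs
  rw [← hs.liminf_eq]
  have hev : ∀ᶠ n : ℕ in atTop, (1 / 2 : ℝ) ^ (n + 1) < L - t :=
    hlim.eventually_lt_const (sub_pos.2 ht.2)
  refine liminf_le_liminf ?_
  filter_upwards [hev] with n hn
  have hp : (0 : ℝ) < (1 / 2) ^ (n + 1) := by positivity
  have hmem : γ (t + (1 / 2) ^ (n + 1)) ∈ ball (γ t) ((1 / 2) ^ n) := by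
    have h1 := hγ.dist_le_mul (t + (1 / 2) ^ (n + 1)) ⟨by linarith [ht.1], by linarith⟩ t
      ⟨ht.1.le, ht.2.le⟩
    rw [Real.dist_eq, add_sub_cancel_left, abs_of_pos hp] at h1
    rw [mem_ball]
    refine h1.trans_lt ?_
    rw [NNReal.coe_one, one_mul, pow_succ]
    have : (0 : ℝ) < (1 / 2) ^ n := by positivity
    linarith
  refine le_trans (le_of_eq ?_) (le_iSup₂ _ hmem)
  rw [Function.comp_apply, Function.comp_apply, smul_eq_mul, abs_mul, abs_inv, abs_of_pos hp,
    inv_mul_eq_div]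

theorem isUpperGradientOf_dyadicLip {X : Type*} [PseudoMetricSpace X] [MeasurableSpace X]
    [BorelSpace X] {v : X → ℝ} {K : ℝ≥0} (hv : LipschitzWith K v) :
    IsUpperGradientOf (fun x => (dyadicLip v x).toReal) v := by
  intro L hL γ hγ
  have hne : ∀ x, dyadicLip v x ≠ ⊤ := fun x => ne_top_of_le_ne_top ENNReal.ofReal_ne_top
    (dyadicLip_le hv x)
  have hac : AbsolutelyContinuousOnInterval (fun s => v (γ s)) 0 L := by
    refine LipschitzOnWith.absolutelyContinuousOnInterval (K := K * 1) ?_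
    rw [uIcc_of_le hL]
    exact hv.comp_lipschitzOnWith hγ
  have hint : IntervalIntegrable (fun t => (dyadicLip v (γ t)).toReal) volume 0 L := by
    rw [intervalIntegrable_iff_integrableOn_Ioc_of_le hL]
    have hmeas : AEMeasurable γ (volume.restrict (Ioc 0 L)) :=
      (hγ.continuousOn.mono Ioc_subset_Icc_self).aemeasurable measurableSet_Ioc
    refine Integrable.of_bound ((measurable_dyadicLip hv.continuous).ennreal_toReal.comp_aemeasurable
        hmeas).aestronglyMeasurable (2 * K) (Eventually.of_forall fun t => ?_)
    rw [Real.norm_of_nonneg ENNReal.toReal_nonneg]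
    exact ENNReal.toReal_le_of_le_ofReal (by positivity) (dyadicLip_le hv _)
  rw [abs_sub_comm, ← hac.integral_deriv_eq_sub, ← Real.norm_eq_abs]
  refine intervalIntegral.norm_integral_le_of_norm_le hL ?_ hint
  have hL' : ∀ᵐ t : ℝ, t ≠ L := by simp [ae_iff]
  filter_upwards [hac.ae_differentiableAt, hL'] with t ht htL htm
  have htI : t ∈ Ioo 0 L := ⟨htm.1, lt_of_le_of_ne htm.2 htL⟩
  rw [Real.norm_eq_abs, ← ENNReal.ofReal_le_iff_le_toReal (hne _)]
  refine ofReal_abs_deriv_le_dyadicLip hγ htI (ht ?_)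
  rw [uIcc_of_le hL]
  exact Ioo_subset_Icc_self htI

theorem abs_setAverage_sub_le {α : Type*} [MeasurableSpace α] {μ : Measure α} {A : Set α}
    {f : α → ℝ} (hA : 0 < μ.real A) (hf : IntegrableOn f A μ) (c : ℝ) :
    |(⨍ x in A, f x ∂μ) - c| ≤ (μ.real A)⁻¹ * ∫ x in A, |f x - c| ∂μ := by
  have hfin : μ A ≠ ⊤ := fun h => by simp [Measure.real, h] at hA
  have h : (⨍ x in A, f x ∂μ) - c = (μ.real A)⁻¹ * ∫ x in A, (f x - c) ∂μ := by
    rw [integral_sub hf (integrableOn_const hfin), setAverage_eq, setIntegral_const, smul_eq_mul,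
      smul_eq_mul]
    field_simp
  rw [h, abs_mul, abs_of_pos (inv_pos.2 hA)]
  gcongr
  exact abs_integral_le_integral_abs

theorem abs_setAverage_sub_setAverage_le {α : Type*} [MeasurableSpace α] {μ : Measure α}
    {A B : Set α} {f : α → ℝ} (hA : 0 < μ.real A) (hAB : A ⊆ B) (hB : μ B ≠ ⊤)
    (hf : IntegrableOn f B μ) :
    |(⨍ x in A, f x ∂μ) - ⨍ x in B, f x ∂μ| ≤
      (μ.real A)⁻¹ * ∫ x in B, |f x - ⨍ z in B, f z ∂μ| ∂μ := by
  refine (abs_setAverage_sub_le hA (hf.mono_set hAB) _).trans ?_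
  refine mul_le_mul_of_nonneg_left ?_ (inv_pos.2 hA).le
  have hi : IntegrableOn (fun x => |f x - ⨍ z in B, f z ∂μ|) B μ :=
    (hf.sub (integrableOn_const hB)).abs
  exact setIntegral_mono_set hi (Eventually.of_forall fun _ => abs_nonneg _) hAB.eventuallyLE

/-- The mean oscillation of `f` exceeds that of `g` by at most twice the `L¹` distance. -/
theorem integral_abs_sub_setAverage_le {α : Type*} [MeasurableSpace α] {μ : Measure α}
    {B : Set α} {f g : α → ℝ} (hB0 : 0 < μ.real B) (hf : IntegrableOn f B μ)
    (hg : IntegrableOn g B μ) :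
    ∫ x in B, |f x - ⨍ z in B, f z ∂μ| ∂μ ≤
      ∫ x in B, |g x - ⨍ z in B, g z ∂μ| ∂μ + 2 * ∫ x in B, |g x - f x| ∂μ := by
  have hfin : μ B ≠ ⊤ := fun h => by simp [Measure.real, h] at hB0
  have hd : |(⨍ z in B, g z ∂μ) - ⨍ z in B, f z ∂μ| * μ.real B ≤ ∫ x in B, |g x - f x| ∂μ := by
    have : (⨍ z in B, g z ∂μ) - ⨍ z in B, f z ∂μ = (μ.real B)⁻¹ * ∫ x in B, (g x - f x) ∂μ := by
      rw [integral_sub hg hf, setAverage_eq, setAverage_eq, smul_eq_mul, smul_eq_mul, mul_sub]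
    rw [this, abs_mul, abs_of_pos (inv_pos.2 hB0), mul_comm, ← mul_assoc,
      mul_inv_cancel₀ hB0.ne', one_mul]
    exact abs_integral_le_integral_abs
  have hgi : IntegrableOn (fun x => |g x - ⨍ z in B, g z ∂μ|) B μ :=
    (hg.sub (integrableOn_const hfin)).abs
  have hdi : IntegrableOn (fun x => |g x - f x|) B μ := (hg.sub hf).abs
  have hci : IntegrableOn (fun _ => |(⨍ z in B, g z ∂μ) - ⨍ z in B, f z ∂μ|) B μ :=
    integrableOn_const hfin
  calc ∫ x in B, |f x - ⨍ z in B, f z ∂μ| ∂μ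
      ≤ ∫ x in B, (|g x - ⨍ z in B, g z ∂μ| + |g x - f x| +
          |(⨍ z in B, g z ∂μ) - ⨍ z in B, f z ∂μ|) ∂μ := by
        refine integral_mono (hf.sub (integrableOn_const hfin)).abs ((hgi.add hdi).add hci)
          fun x => ?_
        dsimp only
        rw [abs_sub_comm (g x) (f x)]
        refine le_trans (le_of_eq ?_) (abs_add_three _ _ _)
        congr 1
        ring
    _ = ∫ x in B, |g x - ⨍ z in B, g z ∂μ| ∂μ + ∫ x in B, |g x - f x| ∂μ +
          |(⨍ z in B, g z ∂μ) - ⨍ z in B, f z ∂μ| * μ.real B := by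
        rw [integral_add (f := fun x => |g x - ⨍ z in B, g z ∂μ| + |g x - f x|) (hgi.add hdi) hci,
          integral_add hgi hdi, setIntegral_const,
          smul_eq_mul, mul_comm (μ.real B)]
    _ ≤ _ := by linarith

theorem LipschitzWith.integrableOn_closedBall {X : Type*} [PseudoMetricSpace X]
    [MeasurableSpace X] [BorelSpace X] {μ : Measure X} {v : X → ℝ} {K : ℝ≥0}
    (hv : LipschitzWith K v) {x : X} {r : ℝ} (h : μ (closedBall x r) < ⊤) :
    IntegrableOn v (closedBall x r) μ := by
  refine Measure.integrableOn_of_bounded (M := |v x| + K * r) h.ne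
    hv.continuous.measurable.aestronglyMeasurable ?_
  filter_upwards [ae_restrict_mem measurableSet_closedBall] with y hy
  have h1 := hv.dist_le_mul y x
  rw [Real.dist_eq] at h1
  have h2 : (K : ℝ) * dist y x ≤ K * r := mul_le_mul_of_nonneg_left (mem_closedBall.1 hy) K.2
  have h3 := abs_sub_abs_le_abs_sub (v y) (v x)
  rw [Real.norm_eq_abs]
  linarith

theorem LipschitzWith.locallyLipschitzOnSet {X : Type*} [PseudoMetricSpace X] {v : X → ℝ}
    {K : ℝ≥0} (hv : LipschitzWith K v) (W : Set X) : LocallyLipschitzOnSet v W :=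
  fun _ _ _ _ => ⟨K, hv.lipschitzOnWith⟩

theorem LocallyLipschitzOnSet.exists_lipschitzWith_eqOn {X : Type*} [PseudoMetricSpace X]
    {v : X → ℝ} {W : Set X} (hv : LocallyLipschitzOnSet v W) {x : X} {r : ℝ}
    (hW : closedBall x r ⊆ W) :
    ∃ (K : ℝ≥0) (w : X → ℝ), LipschitzWith K w ∧ EqOn v w (closedBall x r) := by
  obtain ⟨K, hK⟩ := hv _ isClosed_closedBall isBounded_closedBall hW
  obtain ⟨w, hw, he⟩ := hK.extend_real
  exact ⟨K, w, hw, he⟩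

theorem IsDoublingWith.measure_ball_pos {X : Type*} [PseudoMetricSpace X] [MeasurableSpace X]
    {μ : Measure X} {Cd : ℝ≥0} (h : IsDoublingWith μ Cd) (x : X) {r : ℝ} (hr : 0 < r) :
    0 < μ (ball x r) := by
  simpa [mul_div_cancel₀] using (h x (r / 2) (half_pos hr)).1

theorem IsDoublingWith.measure_ball_lt_top {X : Type*} [PseudoMetricSpace X] [MeasurableSpace X]
    {μ : Measure X} {Cd : ℝ≥0} (h : IsDoublingWith μ Cd) (hCd : 1 ≤ Cd) (x : X) (r : ℝ) :
    μ (ball x r) < ⊤ := by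
  rcases le_or_gt r 0 with hr | hr
  · simp [ball_eq_empty.2 hr]
  · refine lt_of_le_of_lt ?_ (h x r hr).2.2
    exact le_mul_of_one_le_left zero_le (by exact_mod_cast hCd)

theorem IsDoublingWith.measure_closedBall_lt_top {X : Type*} [PseudoMetricSpace X]
    [MeasurableSpace X] {μ : Measure X} {Cd : ℝ≥0} (h : IsDoublingWith μ Cd) (hCd : 1 ≤ Cd)
    (x : X) (r : ℝ) : μ (closedBall x r) < ⊤ :=
  (measure_mono (closedBall_subset_ball (lt_add_one r))).trans_lt (h.measure_ball_lt_top hCd x _)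

theorem IsDoublingWith.measureReal_ball_pos {X : Type*} [PseudoMetricSpace X]
    [MeasurableSpace X] {μ : Measure X} {Cd : ℝ≥0} (h : IsDoublingWith μ Cd) (hCd : 1 ≤ Cd)
    (x : X) {r : ℝ} (hr : 0 < r) : 0 < μ.real (ball x r) :=
  ENNReal.toReal_pos (h.measure_ball_pos x hr).ne' (h.measure_ball_lt_top hCd x r).ne

theorem IsDoublingWith.measureReal_ball_two_mul_le {X : Type*} [PseudoMetricSpace X]
    [MeasurableSpace X] {μ : Measure X} {Cd : ℝ≥0} (h : IsDoublingWith μ Cd)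
    (x : X) {r : ℝ} (hr : 0 < r) : μ.real (ball x (2 * r)) ≤ Cd * μ.real (ball x r) := by
  have h1 := ENNReal.toReal_mono (h x r hr).2.2.ne (h x r hr).2.1
  rwa [ENNReal.toReal_mul, ENNReal.coe_toReal] at h1

theorem IsDoublingWith.secondCountableTopology {X : Type*} [PseudoMetricSpace X]
    [MeasurableSpace X] [BorelSpace X] {μ : Measure X} {Cd : ℝ≥0} (h : IsDoublingWith μ Cd)
    (hCd : 1 ≤ Cd) : SecondCountableTopology X :=
  secondCountableTopology_of_measure_ball μ (fun x _ hr => h.measure_ball_pos x hr)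
    (h.measure_ball_lt_top hCd)

theorem IsBV.integrableOn_closedBall {X : Type*} [MetricSpace X] [MeasurableSpace X]
    [BorelSpace X] {μ : Measure X} {Cd : ℝ≥0} (h : IsDoublingWith μ Cd) (hCd : 1 ≤ Cd)
    {u : X → ℝ} (hu : IsBV μ u) (x : X) (r : ℝ) : IntegrableOn u (closedBall x r) μ := by
  have := h.secondCountableTopology hCd
  obtain ⟨us, hus⟩ := iInf_lt_iff.1 hu.2
  obtain ⟨hlip, hus⟩ := iInf_lt_iff.1 hus
  obtain ⟨hconv, -⟩ := iInf_lt_iff.1 hus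
  obtain ⟨i, hi⟩ := ((hconv _ isClosed_closedBall isBounded_closedBall
    (subset_univ (closedBall x r))).eventually_lt_const zero_lt_one).exists
  obtain ⟨K, w, hw, he⟩ := (hlip i).exists_lipschitzWith_eqOn (subset_univ (closedBall x r))
  have hwi := hw.integrableOn_closedBall (h.measure_closedBall_lt_top hCd x r)
  have hdi : IntegrableOn (fun y => w y - u y) (closedBall x r) μ := by
    refine ⟨hwi.1.sub hu.1.aestronglyMeasurable.restrict, ?_⟩
    rw [hasFiniteIntegral_iff_norm]
    refine lt_of_le_of_lt (le_of_eq ?_) (hi.trans ENNReal.one_lt_top)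
    refine setLIntegral_congr_fun measurableSet_closedBall fun y hy => ?_
    simp only [Real.norm_eq_abs, he hy]
  exact (hwi.sub hdi).congr (Eventually.of_forall fun y => by simp)

theorem SupportsPoincare.integral_le_dyadicLip {X : Type*} [MetricSpace X] [MeasurableSpace X]
    [BorelSpace X] {μ : Measure X} {CP : ℝ} (hP : SupportsPoincare μ CP) {v : X → ℝ} {K : ℝ≥0}
    (hv : LipschitzWith K v) {x : X} {r : ℝ} (hr : 0 < r) (hB : 0 < μ.real (ball x r)) :
    ∫ y in ball x r, |v y - ⨍ z in ball x r, v z ∂μ| ∂μ ≤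
      CP * r * (∫⁻ y in ball x r, dyadicLip v y ∂μ).toReal := by
  have h := hP v (hv.locallyLipschitzOnSet _) _ (fun _ => ENNReal.toReal_nonneg)
    (measurable_dyadicLip hv.continuous).ennreal_toReal (isUpperGradientOf_dyadicLip hv) x r hr
  rw [setAverage_eq, setAverage_eq μ (fun y => (dyadicLip v y).toReal), smul_eq_mul, smul_eq_mul,
    integral_toReal (measurable_dyadicLip hv.continuous).aemeasurable
      (Eventually.of_forall fun y => (dyadicLip_le hv y).trans_lt ENNReal.ofReal_lt_top)] at h
  have h2 := mul_le_mul_of_nonneg_left h hB.le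
  rw [mul_inv_cancel_left₀ hB.ne'] at h2
  refine h2.trans (le_of_eq ?_)
  field_simp

/-- The Poincaré inequality for functions of bounded variation. -/
theorem SupportsPoincare.integral_le_totVarOn {X : Type*} [MetricSpace X] [MeasurableSpace X]
    [BorelSpace X] {μ : Measure X} {Cd : ℝ≥0} {CP : ℝ} (hCd : 1 ≤ Cd) (hCP : 0 < CP)
    (hD : IsDoublingWith μ Cd) (hP : SupportsPoincare μ CP) {u : X → ℝ} (hu : IsBV μ u)
    {x : X} {r ρ : ℝ} (hr : 0 < r) (hρ : r < ρ) (hV : totVarOn μ u (ball x ρ) ≠ ⊤) :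
    ∫ y in ball x r, |u y - ⨍ z in ball x r, u z ∂μ| ∂μ ≤
      4 * CP * r * (totVarOn μ u (ball x ρ)).toReal := by
  have hB := hD.measureReal_ball_pos hCd x hr
  have hui := (hu.integrableOn_closedBall hD hCd x r).mono_set ball_subset_closedBall
  set V := totVarOn μ u (ball x ρ)
  have key : ∀ ε : ℝ, 0 < ε → ∫ y in ball x r, |u y - ⨍ z in ball x r, u z ∂μ| ∂μ ≤
      4 * CP * r * (V.toReal + ε) + 2 * ε := by
    intro ε hε
    obtain ⟨s, hrs, hsρ⟩ := exists_between hρ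
    have hlt : totVarOn μ u (ball x ρ) < V + ENNReal.ofReal ε :=
      ENNReal.lt_add_right hV (ENNReal.ofReal_pos.2 hε).ne'
    obtain ⟨us, hus⟩ := iInf_lt_iff.1 hlt
    obtain ⟨hlip, hus⟩ := iInf_lt_iff.1 hus
    obtain ⟨hconv, hus⟩ := iInf_lt_iff.1 hus
    have hsub : closedBall x s ⊆ ball x ρ := closedBall_subset_ball hsρ
    obtain ⟨i, hi1, hi2⟩ := ((frequently_lt_of_liminf_lt (by isBoundedDefault) hus).and_eventually
      ((hconv _ isClosed_closedBall isBounded_closedBall hsub).eventually_lt_const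
        (ENNReal.ofReal_pos.2 hε))).exists
    obtain ⟨K, w, hw, he⟩ := (hlip i).exists_lipschitzWith_eqOn hsub
    have hwi : IntegrableOn w (ball x r) μ :=
      (hw.integrableOn_closedBall (hD.measure_closedBall_lt_top hCd x r)).mono_set
        ball_subset_closedBall
    have hdi : IntegrableOn (fun y => |w y - u y|) (ball x r) μ := (hwi.sub hui).abs
    have h1 : ∫ y in ball x r, |w y - u y| ∂μ ≤ ε := by
      rw [integral_eq_lintegral_of_nonneg_ae (Eventually.of_forall fun _ => abs_nonneg _)
        hdi.1]
      refine ENNReal.toReal_le_of_le_ofReal hε.le (le_trans ?_ hi2.le)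
      refine (setLIntegral_congr_fun measurableSet_ball fun y hy => ?_).trans_le
        (lintegral_mono_set (ball_subset_closedBall.trans (closedBall_subset_closedBall hrs.le)))
      simp only [he (ball_subset_closedBall.trans (closedBall_subset_closedBall hrs.le) hy)]
    have h2 : (∫⁻ y in ball x r, dyadicLip w y ∂μ).toReal ≤ 4 * (V.toReal + ε) := by
      have h3 : ∫⁻ y in ball x r, dyadicLip w y ∂μ ≤ 4 * (V + ENNReal.ofReal ε) := by
        calc ∫⁻ y in ball x r, dyadicLip w y ∂μ
            ≤ ∫⁻ y in ball x r, 4 * lipConst (us i) y ∂μ := by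
              refine setLIntegral_mono' measurableSet_ball fun y hy => dyadicLip_le_lipConst ?_
              filter_upwards [isOpen_ball.mem_nhds (ball_subset_ball hrs.le hy)] with z hz
              exact (he (ball_subset_closedBall hz)).symm
          _ = 4 * ∫⁻ y in ball x r, lipConst (us i) y ∂μ :=
              lintegral_const_mul' _ _ (by norm_num)
          _ ≤ 4 * ∫⁻ y in ball x ρ, lipConst (us i) y ∂μ := by
              gcongr
          _ ≤ _ := by gcongr
      have h4 := ENNReal.toReal_mono (by finiteness) h3
      rwa [ENNReal.toReal_mul, ENNReal.toReal_add hV ENNReal.ofReal_ne_top,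
        ENNReal.toReal_ofReal hε.le, ENNReal.toReal_ofNat] at h4
    have h5 := hP.integral_le_dyadicLip hw hr hB
    have h6 := integral_abs_sub_setAverage_le hB hui hwi
    have h7 : CP * r * (∫⁻ y in ball x r, dyadicLip w y ∂μ).toReal ≤
        CP * r * (4 * (V.toReal + ε)) := by gcongr
    linarith
  have hlim : Tendsto (fun ε : ℝ => 4 * CP * r * (V.toReal + ε) + 2 * ε) (𝓝[>] 0)
      (𝓝 (4 * CP * r * V.toReal)) := by
    have : Tendsto (fun ε : ℝ => 4 * CP * r * (V.toReal + ε) + 2 * ε) (𝓝 0)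
        (𝓝 (4 * CP * r * (V.toReal + 0) + 2 * 0)) := Continuous.tendsto (by fun_prop) 0
    simpa using this.mono_left nhdsWithin_le_nhds
  exact ge_of_tendsto hlim (by filter_upwards [self_mem_nhdsWithin] with ε hε using key ε hε)

theorem SupportsPoincare.abs_setAverage_sub_setAverage_le {X : Type*} [MetricSpace X]
    [MeasurableSpace X] [BorelSpace X] {μ : Measure X} {Cd : ℝ≥0} {CP : ℝ} (hCd : 1 ≤ Cd)
    (hCP : 0 < CP) (hD : IsDoublingWith μ Cd) (hP : SupportsPoincare μ CP) {u : X → ℝ}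
    (hu : IsBV μ u) {a x : X} {s r : ℝ} (hs : 0 < s) (hr : 0 < r)
    (hsub : ball a s ⊆ ball x r) (hsub' : ball x r ⊆ ball a (8 * s)) {M : ℝ≥0∞} (hM : M ≠ ⊤)
    (hV : totVarOn μ u (ball x (4 / 3 * r)) / μ (ball x (4 / 3 * r)) ≤ M) :
    |(⨍ y in ball a s, u y ∂μ) - ⨍ y in ball x r, u y ∂μ| ≤
      4 * CP * Cd ^ 4 * r * M.toReal := by
  have hA := hD.measureReal_ball_pos hCd a hs
  have hfin := (hD.measure_ball_lt_top hCd x (4 / 3 * r)).ne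
  rw [ENNReal.div_le_iff (hD.measure_ball_pos x (by positivity)).ne' hfin] at hV
  have hV' : totVarOn μ u (ball x (4 / 3 * r)) ≠ ⊤ :=
    ne_top_of_le_ne_top (ENNReal.mul_ne_top hM hfin) hV
  have hVr := ENNReal.toReal_mono (ENNReal.mul_ne_top hM hfin) hV
  rw [ENNReal.toReal_mul] at hVr
  have h1 : μ.real (ball x (4 / 3 * r)) ≤ Cd * μ.real (ball x r) :=
    (measureReal_mono (ball_subset_ball (by linarith))
      (hD.measure_ball_lt_top hCd x _).ne).trans (hD.measureReal_ball_two_mul_le x hr)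
  have h2 : μ.real (ball x r) ≤ Cd ^ 3 * μ.real (ball a s) := by
    calc μ.real (ball x r) ≤ μ.real (ball a (2 * (2 * (2 * s)))) :=
          measureReal_mono (hsub'.trans (ball_subset_ball (by linarith)))
            (hD.measure_ball_lt_top hCd a _).ne
      _ ≤ Cd * (Cd * (Cd * μ.real (ball a s))) := by
          refine (hD.measureReal_ball_two_mul_le a (by positivity)).trans ?_
          gcongr
          refine (hD.measureReal_ball_two_mul_le a (by positivity)).trans ?_
          gcongr
          exact hD.measureReal_ball_two_mul_le a hs
      _ = _ := by ring
  have hui := (hu.integrableOn_closedBall hD hCd x r).mono_set ball_subset_closedBall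
  calc |(⨍ y in ball a s, u y ∂μ) - ⨍ y in ball x r, u y ∂μ|
      ≤ (μ.real (ball a s))⁻¹ * ∫ y in ball x r, |u y - ⨍ z in ball x r, u z ∂μ| ∂μ :=
        _root_.abs_setAverage_sub_setAverage_le hA hsub (hD.measure_ball_lt_top hCd x r).ne hui
    _ ≤ (μ.real (ball a s))⁻¹ *
          (4 * CP * r * (M.toReal * (Cd * (Cd ^ 3 * μ.real (ball a s))))) := by
        gcongr
        refine (hP.integral_le_totVarOn hCd hCP hD hu hr (by linarith) hV').trans ?_
        gcongr
        refine hVr.trans ?_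
        gcongr
        exact h1.trans (by gcongr)
    _ = _ := by field_simp

theorem SupportsPoincare.abs_sub_setAverage_le {X : Type*} [MetricSpace X]
    [MeasurableSpace X] [BorelSpace X] {μ : Measure X} {Cd : ℝ≥0} {CP : ℝ} (hCd : 1 ≤ Cd)
    (hCP : 0 < CP) (hD : IsDoublingWith μ Cd) (hP : SupportsPoincare μ CP) {u : X → ℝ}
    (hu : IsBV μ u) {x : X} (hx : LebesguePointOf μ u x) {r : ℝ} (hr : 0 < r) {M : ℝ≥0∞}
    (hM : M ≠ ⊤) (hV : ∀ ρ, 0 < ρ → ρ ≤ 4 / 3 * r →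
      totVarOn μ u (ball x ρ) / μ (ball x ρ) ≤ M) :
    |(⨍ y in ball x r, u y ∂μ) - u x| ≤ 8 * CP * Cd ^ 4 * r * M.toReal := by
  have hpos : ∀ n : ℕ, 0 < r / 2 ^ n := fun n => by positivity
  have hlim : Tendsto (fun n : ℕ => r / 2 ^ n) atTop (𝓝[>] 0) := by
    refine tendsto_nhdsWithin_iff.2 ⟨?_, Eventually.of_forall hpos⟩
    exact tendsto_const_nhds.div_atTop (tendsto_pow_atTop_atTop_of_one_lt one_lt_two)
  have hav : Tendsto (fun n : ℕ => ⨍ y in ball x (r / 2 ^ n), u y ∂μ) atTop (𝓝 (u x)) := by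
    rw [tendsto_iff_dist_tendsto_zero]
    refine squeeze_zero (fun _ => dist_nonneg) (fun n => ?_) (hx.comp hlim)
    rw [Real.dist_eq]
    refine (abs_setAverage_sub_le (hD.measureReal_ball_pos hCd x (hpos n))
      ((hu.integrableOn_closedBall hD hCd x _).mono_set ball_subset_closedBall) _).trans
      (le_of_eq ?_)
    rw [Function.comp_apply, setAverage_eq, smul_eq_mul]
  have h := dist_le_of_le_geometric_two_of_tendsto₀
    (f := fun n : ℕ => ⨍ y in ball x (r / 2 ^ n), u y ∂μ) (C := 8 * CP * Cd ^ 4 * r * M.toReal)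
    (fun n => ?_) hav
  · simpa [Real.dist_eq] using h
  · have hhalf : r / 2 ^ (n + 1) = r / 2 ^ n / 2 := by rw [pow_succ]; field_simp
    have hle : r / 2 ^ n ≤ r := div_le_self hr.le (one_le_pow₀ one_le_two)
    rw [dist_comm, Real.dist_eq]
    refine (hP.abs_setAverage_sub_setAverage_le hCd hCP hD hu (hpos (n + 1)) (hpos n)
      (ball_subset_ball ?_) (ball_subset_ball ?_) hM (hV _ (by positivity) ?_)).trans
      (le_of_eq ?_)
    · linarith [hpos n]
    · linarith [hpos n]
    · linarith
    · ring

theorem statement18 (Cd : ℝ≥0) (CP : ℝ) (hCd : 1 ≤ Cd) (hCP : 0 < CP) :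
    ∃ C : ℝ, 1 ≤ C ∧
      ∀ (X : Type u) [MetricSpace X] [MeasurableSpace X] [BorelSpace X]
        (μ : Measure X), GoodSpace X μ Cd CP →
        ∀ u : X → ℝ, IsBV μ u →
          ∀ y z : X, LebesguePointOf μ u y → LebesguePointOf μ u z → y ≠ z →
            ENNReal.ofReal |u y - u z| ≤
              ENNReal.ofReal (C * dist y z) *
                ((⨆ (ρ : ℝ) (_ : 0 < ρ) (_ : ρ ≤ 2 * dist y z),
                    totVarOn μ u (ball y ρ) / μ (ball y ρ)) +
                  (⨆ (ρ : ℝ) (_ : 0 < ρ) (_ : ρ ≤ 2 * dist y z),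
                    totVarOn μ u (ball z ρ) / μ (ball z ρ))) := by
  refine ⟨max 1 (20 * CP * Cd ^ 4), le_max_left _ _, ?_⟩
  intro X _ _ _ μ ⟨_, _, _, hD, hP⟩ u hu y z hy hz hyz
  have hd : 0 < dist y z := dist_pos.2 hyz
  set d := dist y z
  set My := ⨆ (ρ : ℝ) (_ : 0 < ρ) (_ : ρ ≤ 2 * d), totVarOn μ u (ball y ρ) / μ (ball y ρ)
  set Mz := ⨆ (ρ : ℝ) (_ : 0 < ρ) (_ : ρ ≤ 2 * d), totVarOn μ u (ball z ρ) / μ (ball z ρ)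
  have hMyle : ∀ ρ, 0 < ρ → ρ ≤ 2 * d → totVarOn μ u (ball y ρ) / μ (ball y ρ) ≤ My :=
    fun ρ h1 h2 => le_iSup_of_le ρ (le_iSup₂_of_le h1 h2 le_rfl)
  have hMzle : ∀ ρ, 0 < ρ → ρ ≤ 2 * d → totVarOn μ u (ball z ρ) / μ (ball z ρ) ≤ Mz :=
    fun ρ h1 h2 => le_iSup_of_le ρ (le_iSup₂_of_le h1 h2 le_rfl)
  have hC : 0 < max 1 (20 * CP * (Cd : ℝ) ^ 4) * d :=
    mul_pos (zero_lt_one.trans_le (le_max_left _ _)) hd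
  rcases eq_or_ne (My + Mz) ⊤ with htop | htop
  · rw [htop, ENNReal.mul_top (ENNReal.ofReal_pos.2 hC).ne']
    exact le_top
  obtain ⟨hy', hz'⟩ := ENNReal.add_ne_top.1 htop
  rw [← ENNReal.ofReal_toReal htop, ← ENNReal.ofReal_mul hC.le,
    ENNReal.toReal_add hy' hz']
  refine ENNReal.ofReal_le_ofReal ?_
  have e1 := hP.abs_sub_setAverage_le hCd hCP hD hu hy (r := 3 / 2 * d) (by positivity) hy'
    fun ρ h1 h2 => hMyle ρ h1 (by linarith)
  have e2 := hP.abs_sub_setAverage_le hCd hCP hD hu hz (r := 1 / 2 * d) (by positivity) hz'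
    fun ρ h1 h2 => hMzle ρ h1 (by linarith)
  have e3 := hP.abs_setAverage_sub_setAverage_le hCd hCP hD hu (a := z) (x := y)
    (s := 1 / 2 * d) (r := 3 / 2 * d) (by positivity) (by positivity)
    (ball_subset_ball' (by rw [dist_comm z y]; linarith))
    (ball_subset_ball' (by linarith)) hy' (hMyle _ (by positivity) (by linarith))
  have e4 : |u y - u z| ≤ |(⨍ w in ball y (3 / 2 * d), u w ∂μ) - u y| +
      |(⨍ w in ball z (1 / 2 * d), u w ∂μ) - u z| +
      |(⨍ w in ball z (1 / 2 * d), u w ∂μ) - ⨍ w in ball y (3 / 2 * d), u w ∂μ| := by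
    rw [abs_sub_comm _ (u y), abs_sub_comm (⨍ w in ball z (1 / 2 * d), u w ∂μ)
      (⨍ w in ball y (3 / 2 * d), u w ∂μ)]
    refine le_trans (le_of_eq ?_) (abs_add_three _ _ _)
    congr 1
    ring
  have hMy0 : 0 ≤ CP * Cd ^ 4 * d * My.toReal := by positivity
  have hMz0 : 0 ≤ CP * Cd ^ 4 * d * Mz.toReal := by positivity
  calc |u y - u z| ≤ 20 * CP * Cd ^ 4 * d * (My.toReal + Mz.toReal) := by linarith
    _ ≤ _ := by
      gcongr
      exact le_max_right _ _

end
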